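/- arXiv:2202.05990 — 2 statements merged into one kernel-verified Lean document; each statement's English description precedes it below -/
import Mathlib

section
/- The limit in-H-index level sets satisfy the in-degree constraint: let G be a finite directed graph and c a natural number. Then the set S_c = {u ∈ V : iH_G^(∞)(u) ≥ c} has the property that every vertex u ∈ S_c has at least c in-neighbors inside S_c; in other words, S_c satisfies the (c,0)-degree constraints, so S_c is contained in the (c,0)-core of G. -/
open Finset

variable {V : Type*} [Fintype V] [DecidableEq V]

/-- The in-neighbors of `v` within `S`: vertices `u ∈ S` with an edge `u → v`. -/
def inN (E : V → V → Prop) [DecidableRel E] (S : Finset V) (v : V) : Finset V :=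
  S.filter (fun u => E u v)

/-- The out-neighbors of `v` within `S`: vertices `u ∈ S` with an edge `v → u`. -/
def outN (E : V → V → Prop) [DecidableRel E] (S : Finset V) (v : V) : Finset V :=
  S.filter (fun u => E v u)

/-- `S` satisfies the `(k,l)`-degree constraints: every `v ∈ S` has at least `k`
in-neighbors in `S` and at least `l` out-neighbors in `S`. -/
def satisfiesKL (E : V → V → Prop) [DecidableRel E] (k l : ℕ) (S : Finset V) : Prop :=
  ∀ v ∈ S, k ≤ (inN E S v).card ∧ l ≤ (outN E S v).card

instance (E : V → V → Prop) [DecidableRel E] (k l : ℕ) (S : Finset V) :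
    Decidable (satisfiesKL E k l S) := by unfold satisfiesKL; infer_instance

/-- The `(k,l)`-core of the graph: the union of all vertex subsets satisfying the
`(k,l)`-degree constraints. -/
def core (E : V → V → Prop) [DecidableRel E] (k l : ℕ) : Finset V :=
  (Finset.univ.powerset.filter (satisfiesKL E k l)).sup id

/-- `kmax E v`: the largest `k` such that `v` belongs to the `(k,0)`-core. -/
noncomputable def kmax (E : V → V → Prop) [DecidableRel E] (v : V) : ℕ :=
  sSup {k : ℕ | v ∈ core E k 0}

/-- `lmax E v k`: the largest `l` such that `v` belongs to the `(k,l)`-core. -/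
noncomputable def lmax (E : V → V → Prop) [DecidableRel E] (v : V) (k : ℕ) : ℕ :=
  sSup {l : ℕ | v ∈ core E k l}

/-- The H-index of a finite multiset of naturals: the largest `h` such that at least
`h` elements (with multiplicity) are `≥ h`. -/
noncomputable def hIndex (M : Multiset ℕ) : ℕ :=
  sSup {h : ℕ | h ≤ (M.filter (fun x => h ≤ x)).card}

/-- The `n`-order in-H-index of a vertex `v` in the graph with vertex set `S`
and edge relation `E`. -/
noncomputable def iH (E : V → V → Prop) [DecidableRel E] (S : Finset V) : ℕ → V → ℕ
  | 0 => fun v => (inN E S v).card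
  | n + 1 => fun v => hIndex ((inN E S v).val.map (iH E S n))

/-- The `n`-order out-H-index of a vertex `v` in the graph with vertex set `S`
and edge relation `E`. -/
noncomputable def oH (E : V → V → Prop) [DecidableRel E] (S : Finset V) : ℕ → V → ℕ
  | 0 => fun v => (outN E S v).card
  | n + 1 => fun v => hIndex ((outN E S v).val.map (oH E S n))

/-- The eventual (limit) value of the in-H-index sequence. -/
noncomputable def iHlim (E : V → V → Prop) [DecidableRel E] (S : Finset V) (v : V) : ℕ :=
  ⨅ n, iH E S n v

/-- The eventual (limit) value of the out-H-index sequence. -/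
noncomputable def oHlim (E : V → V → Prop) [DecidableRel E] (S : Finset V) (v : V) : ℕ :=
  ⨅ n, oH E S n v

/-- `(k,l)` is a skyline coreness of `v`: `v` is in the `(k,l)`-core and there is no
pair `(k',l')` strictly dominating `(k,l)` with `v` in the `(k',l')`-core. -/
def skyline (E : V → V → Prop) [DecidableRel E] (v : V) (p : ℕ × ℕ) : Prop :=
  v ∈ core E p.1 p.2 ∧
    ¬ ∃ q : ℕ × ℕ, (p.1 ≤ q.1 ∧ p.2 ≤ q.2 ∧ p ≠ q) ∧ v ∈ core E q.1 q.2

/-- The level set `S_c = {u : iH^(∞)(u) ≥ c}` of the limit in-H-index. -/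
noncomputable def levelSet (E : V → V → Prop) [DecidableRel E] (c : ℕ) : Finset V :=
  @Finset.filter _ (fun u => c ≤ iHlim E Finset.univ u) (Classical.decPred _) Finset.univ

/-!
The in-H-index sequence is antitone in its order, so at each vertex it is eventually equal to its
limit. A vertex has only finitely many in-neighbors, so a common order serves them all, and the
limit is a fixed point of the H-index recursion. Since `c ≤ hIndex M` holds exactly when at least
`c` elements of `M` are `≥ c`, the fixed-point equation says that a vertex lies in the `c`-level set
exactly when at least `c` of its in-neighbors do.
-/

open Filter

theorem le_hIndex_iff {M : Multiset ℕ} {c : ℕ} :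
    c ≤ hIndex M ↔ c ≤ (M.filter (c ≤ ·)).card := by
  have bddAbove : BddAbove {h : ℕ | h ≤ (M.filter (h ≤ ·)).card} :=
    ⟨M.card, fun _ hh => hh.trans (Multiset.card_le_card (Multiset.filter_le _ M))⟩
  have attained : hIndex M ≤ (M.filter (hIndex M ≤ ·)).card :=
    Nat.sSup_mem (s := {h : ℕ | h ≤ (M.filter (h ≤ ·)).card}) ⟨0, Nat.zero_le _⟩ bddAbove
  refine ⟨fun hc => ?_, fun hc => le_csSup bddAbove hc⟩
  calc c ≤ hIndex M := hc
    _ ≤ (M.filter (hIndex M ≤ ·)).card := attained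
    _ ≤ (M.filter (c ≤ ·)).card :=
      Multiset.card_le_card (Multiset.monotone_filter_right M fun _ hx => hc.trans hx)

theorem hIndex_le_card (M : Multiset ℕ) : hIndex M ≤ M.card :=
  (le_hIndex_iff.1 le_rfl).trans (Multiset.card_le_card (Multiset.filter_le _ M))

section

variable {α : Type*}

theorem le_hIndex_map_iff {s : Finset α} {f : α → ℕ} {c : ℕ} :
    c ≤ hIndex (s.val.map f) ↔ c ≤ #{a ∈ s | c ≤ f a} := by
  rw [le_hIndex_iff, Multiset.filter_map, Multiset.card_map]
  rfl

theorem hIndex_map_mono (s : Finset α) : Monotone fun f : α → ℕ => hIndex (s.val.map f) := by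
  intro f g hfg
  refine le_hIndex_map_iff.2 ((le_hIndex_map_iff.1 le_rfl).trans (card_le_card ?_))
  exact monotone_filter_right s fun a _ ha => ha.trans (hfg a)

variable (E : α → α → Prop) [DecidableRel E] (S : Finset α)

theorem iH_antitone : Antitone (iH E S) := by
  refine antitone_nat_of_succ_le fun n => ?_
  induction n with
  | zero => exact fun v => (hIndex_le_card _).trans_eq (Multiset.card_map _ _)
  | succ n ih => exact fun v => hIndex_map_mono (inN E S v) ih

theorem eventually_iH_eq_iHlim (v : α) : ∀ᶠ n in atTop, iH E S n v = iHlim E S v := by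
  have antitone : Antitone fun n => iH E S n v := fun _ _ hmn => iH_antitone E S hmn v
  rw [← tendsto_pure, ← nhds_discrete]
  exact tendsto_atTop_ciInf antitone (OrderBot.bddBelow _)

theorem iHlim_eq_hIndex (v : α) :
    iHlim E S v = hIndex ((inN E S v).val.map (iHlim E S)) := by
  have stable_at_v : ∀ᶠ n in atTop, iH E S (n + 1) v = iHlim E S v :=
    (tendsto_add_atTop_nat 1).eventually (eventually_iH_eq_iHlim E S v)
  have stable_on_inN : ∀ᶠ n in atTop, ∀ u ∈ inN E S v, iH E S n u = iHlim E S u :=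
    (eventually_all_finset _).2 fun u _ => eventually_iH_eq_iHlim E S u
  obtain ⟨n, hv, hu⟩ := (stable_at_v.and stable_on_inN).exists
  calc iHlim E S v = iH E S (n + 1) v := hv.symm
    _ = hIndex ((inN E S v).val.map (iH E S n)) := rfl
    _ = hIndex ((inN E S v).val.map (iHlim E S)) := by rw [Multiset.map_congr rfl hu]

theorem le_iHlim_iff {c : ℕ} {v : α} :
    c ≤ iHlim E S v ↔ c ≤ #(inN E {u ∈ S | c ≤ iHlim E S u} v) := by
  rw [iHlim_eq_hIndex, le_hIndex_map_iff, inN, inN, filter_comm]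

theorem satisfiesKL_filter_le_iHlim (c : ℕ) :
    satisfiesKL E c 0 {u ∈ S | c ≤ iHlim E S u} :=
  fun _ hv => ⟨(le_iHlim_iff E S).1 (mem_filter.1 hv).2, Nat.zero_le _⟩

theorem levelSet_eq_filter [Fintype α] (c : ℕ) :
    levelSet E c = univ.filter (c ≤ iHlim E univ ·) := by
  unfold levelSet
  congr

end

theorem satisfiesKL.subset_core {E : V → V → Prop} [DecidableRel E] {k l : ℕ} {S : Finset V}
    (hS : satisfiesKL E k l S) : S ⊆ core E k l :=
  le_sup (f := id) (mem_filter.2 ⟨mem_powerset.2 (subset_univ S), hS⟩)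

/-- Every vertex of `S_c` has at least `c` in-neighbors inside `S_c`;
hence `S_c` satisfies the `(c,0)`-degree constraints and is contained in the `(c,0)`-core. -/
theorem levelSet_in_core (E : V → V → Prop) [DecidableRel E] (c : ℕ) :
    (∀ u ∈ levelSet E c, c ≤ (inN E (levelSet E c) u).card) ∧
    satisfiesKL E c 0 (levelSet E c) ∧
    levelSet E c ⊆ core E c 0 := by
  have constraints : satisfiesKL E c 0 (levelSet E c) :=
    levelSet_eq_filter E c ▸ satisfiesKL_filter_le_iHlim E univ c
  exact ⟨fun u hu => (constraints u hu).1, constraints, constraints.subset_core⟩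
end

section
/- Convergence of the n-order D-index (Theorem 5.1): let G be a finite directed graph and v a vertex. Define D^(0)(v) = {(in-degree of v in G, out-degree of v in G)}, and for n > 0 define D^(n)(v) to be the set of pairs (k,l) of naturals that are maximal under the dominance order ⪯ among all pairs (k,l) such that (a) at least k in-neighbors u of v have some pair (k_u,l_u) ∈ D^(n-1)(u) with k ≤ k_u and l ≤ l_u, and (b) at least l out-neighbors w of v have some pair (k_w,l_w) ∈ D^(n-1)(w) with k ≤ k_w and l ≤ l_w. Then the sequence n ↦ D^(n)(v) is eventually constant and its eventual value equals SC(v), the set of skyline corenesses of v. -/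
open Finset

variable {V : Type*} [Fintype V] [DecidableEq V]

/-- A pair `p` is a candidate at step `n+1` for vertex `v` w.r.t. previous-step indices `D`:
at least `p.1` in-neighbors and at least `p.2` out-neighbors carry a pair dominating `p`. -/
def cand (E : V → V → Prop) (D : V → Set (ℕ × ℕ)) (v : V) (p : ℕ × ℕ) : Prop :=
  p.1 ≤ Set.ncard {u : V | E u v ∧ ∃ q ∈ D u, p.1 ≤ q.1 ∧ p.2 ≤ q.2} ∧
  p.2 ≤ Set.ncard {u : V | E v u ∧ ∃ q ∈ D u, p.1 ≤ q.1 ∧ p.2 ≤ q.2}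

/-- The `n`-order D-index: `D^(0)(v) = {(indeg v, outdeg v)}`, and `D^(n+1)(v)` is the set
of pairs maximal under the dominance order among the candidates w.r.t. `D^(n)`. -/
noncomputable def Dseq (E : V → V → Prop) [DecidableRel E] : ℕ → V → Set (ℕ × ℕ)
  | 0 => fun v => {((inN E Finset.univ v).card, (outN E Finset.univ v).card)}
  | n + 1 => fun v =>
      {p | cand E (Dseq E n) v p ∧
        ∀ q : ℕ × ℕ, cand E (Dseq E n) v q → p.1 ≤ q.1 → p.2 ≤ q.2 → p = q}

/-!
Fix `(k, l)` and start from all vertices, repeatedly keeping only those with at least `k`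
in-neighbors and `l` out-neighbors among the vertices kept in the previous round. Every round
before the process stops removes a vertex, so after `|V|` rounds it has reached the `(k, l)`-core.

The D-index performs this peeling for all pairs at once: `(k, l)` is dominated by an element of
`D^(n)(v)` exactly when `v` survives `n + 1` rounds for `(k, l)`. As `D^(n)(v)` is an antichain, it
is the set of maximal such pairs, and for large `n` these are the maximal pairs whose core
contains `v`.
-/

section Iterate

variable {α : Type*} [Fintype α] {f : Finset α → Finset α}

lemma isFixedPt_iterate_univ_of_card_le (hf : Monotone f) {n : ℕ} (hn : Fintype.card α ≤ n) :
    Function.IsFixedPt f (f^[n] univ) := by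
  classical
  have anti : Antitone fun m => f^[m] univ := hf.antitone_iterate_of_map_le (subset_univ _)
  have step_eq {m : ℕ} (h : #(f^[m] univ)ᶜ = #(f^[m + 1] univ)ᶜ) :
      f^[m + 1] univ = f^[m] univ :=
    compl_injective (eq_of_subset_of_card_le (compl_le_compl (anti m.le_succ)) h.ge).symm
  have card_compl_eq {m : ℕ} (hm : Fintype.card α ≤ m) :
      #(f^[m] univ)ᶜ = #(f^[Fintype.card α] univ)ᶜ := by
    refine Nat.stabilises_of_monotone (f := fun m => #(f^[m] univ)ᶜ)
      (fun _ _ h => card_le_card (compl_le_compl (anti h))) (fun _ => card_le_univ _)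
      (fun m h => ?_) hm
    simp only [Function.iterate_succ_apply' f (m + 1), step_eq h, ← Function.iterate_succ_apply' f]
  rw [Function.IsFixedPt, ← Function.iterate_succ_apply' f]
  exact step_eq ((card_compl_eq hn).trans (card_compl_eq (hn.trans n.le_succ)).symm)

lemma subset_iterate_univ (hf : Monotone f) {S : Finset α} (hS : S ⊆ f S) (n : ℕ) :
    S ⊆ f^[n] univ :=
  (hf.monotone_iterate_of_le_map hS n.zero_le).trans (hf.iterate n (subset_univ S))

end Iterate

section Peeling

variable {α : Type*} [Fintype α] (E : α → α → Prop) [DecidableRel E]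

/-- One round of peeling for the `(k,l)`-degree constraints: the vertices with at least `k`
in-neighbors and `l` out-neighbors in `S`. They need not lie in `S` themselves, which makes the
operation monotone in `S`. -/
def peelStep (k l : ℕ) (S : Finset α) : Finset α :=
  {v | k ≤ #(inN E S v) ∧ l ≤ #(outN E S v)}

variable {E}

lemma mem_peelStep {k l : ℕ} {S : Finset α} {v : α} :
    v ∈ peelStep E k l S ↔ k ≤ #(inN E S v) ∧ l ≤ #(outN E S v) :=
  mem_filter_univ v

lemma peelStep_mono (k l : ℕ) : Monotone (peelStep E k l) := fun _ _ hST =>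
  monotone_filter_right univ fun _ _ h =>
    ⟨h.1.trans (card_le_card (filter_subset_filter _ hST)),
      h.2.trans (card_le_card (filter_subset_filter _ hST))⟩

lemma satisfiesKL_iff_subset_peelStep {k l : ℕ} {S : Finset α} :
    satisfiesKL E k l S ↔ S ⊆ peelStep E k l S :=
  forall₂_congr fun _ _ => mem_peelStep.symm

lemma mem_core_iff_exists [DecidableEq α] {k l : ℕ} {v : α} :
    v ∈ core E k l ↔ ∃ S, satisfiesKL E k l S ∧ v ∈ S := by
  simp [core, mem_sup]

lemma core_eq_iterate_peelStep [DecidableEq α] (k l : ℕ) {n : ℕ} (hn : Fintype.card α ≤ n) :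
    core E k l = (peelStep E k l)^[n] univ := by
  ext v
  rw [mem_core_iff_exists]
  constructor
  · rintro ⟨S, hS, hvS⟩
    exact subset_iterate_univ (peelStep_mono k l) (satisfiesKL_iff_subset_peelStep.1 hS) n hvS
  · have fixed := isFixedPt_iterate_univ_of_card_le (peelStep_mono (E := E) k l) hn
    exact fun hv => ⟨_, satisfiesKL_iff_subset_peelStep.2 fixed.symm.subset, hv⟩

end Peeling

section Candidates

variable {α : Type*} {E : α → α → Prop} {D : α → Set (ℕ × ℕ)} {v : α}

lemma isLowerSet_setOf_cand [Finite α] : IsLowerSet {p | cand E D v p} := by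
  rintro q p hpq ⟨hin, hout⟩
  have dominated_mono {R : α → Prop} :
      {u | R u ∧ ∃ r ∈ D u, q.1 ≤ r.1 ∧ q.2 ≤ r.2}.ncard ≤
        {u | R u ∧ ∃ r ∈ D u, p.1 ≤ r.1 ∧ p.2 ≤ r.2}.ncard :=
    Set.ncard_le_ncard fun _ ⟨hu, r, hr, hqr⟩ => ⟨hu, r, hr, hpq.trans hqr⟩
  exact ⟨hpq.1.trans (hin.trans dominated_mono), hpq.2.trans (hout.trans dominated_mono)⟩

lemma finite_setOf_cand [Finite α] : {p | cand E D v p}.Finite :=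
  (Set.finite_Iic (Nat.card α, Nat.card α)).subset fun _ hp =>
    ⟨hp.1.trans (Set.ncard_le_card _), hp.2.trans (Set.ncard_le_card _)⟩

lemma cand_iff_mem_peelStep [Fintype α] [DecidableRel E] {p : ℕ × ℕ} {S : Finset α}
    (hS : ∀ u, p ∈ lowerClosure (D u) ↔ u ∈ S) :
    cand E D v p ↔ v ∈ peelStep E p.1 p.2 S := by
  have dominated_iff (u : α) : (∃ q ∈ D u, p.1 ≤ q.1 ∧ p.2 ≤ q.2) ↔ u ∈ S := hS u
  simp only [cand, dominated_iff, mem_peelStep, inN, outN, ← Set.ncard_coe_finset, coe_filter,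
    and_comm (a := _ ∈ S)]

end Candidates

section DIndex

variable {α : Type*} [Fintype α] {E : α → α → Prop} [DecidableRel E]

lemma Dseq_succ_eq_setOf_maximal (n : ℕ) (v : α) :
    Dseq E (n + 1) v = {p | Maximal (cand E (Dseq E n) v) p} := by
  ext p
  simp only [Dseq, Set.mem_ofPred_eq, maximal_iff, Prod.le_def, and_imp]

lemma isAntichain_Dseq (n : ℕ) (v : α) : IsAntichain (· ≤ ·) (Dseq E n v) := by
  cases n with
  | zero => exact Set.subsingleton_singleton.isAntichain _
  | succ n =>
    rw [Dseq_succ_eq_setOf_maximal]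
    exact setOfPred_maximal_antichain _

lemma mem_lowerClosure_Dseq_succ {n : ℕ} {v : α} {p : ℕ × ℕ} :
    p ∈ lowerClosure (Dseq E (n + 1) v) ↔ cand E (Dseq E n) v p := by
  rw [Dseq_succ_eq_setOf_maximal, mem_lowerClosure]
  constructor
  · rintro ⟨q, hq, hpq⟩
    exact isLowerSet_setOf_cand hpq hq.prop
  · intro hp
    obtain ⟨q, hpq, hq⟩ := finite_setOf_cand.exists_le_maximal hp
    exact ⟨q, hq, hpq⟩

lemma mem_lowerClosure_Dseq_iff_mem_iterate {n : ℕ} {v : α} {p : ℕ × ℕ} :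
    p ∈ lowerClosure (Dseq E n v) ↔ v ∈ (peelStep E p.1 p.2)^[n + 1] univ := by
  induction n generalizing v with
  | zero => simp [Dseq, mem_peelStep, Prod.le_def]
  | succ n ih =>
    rw [mem_lowerClosure_Dseq_succ, cand_iff_mem_peelStep fun _ => ih,
      ← Function.iterate_succ_apply' (peelStep E p.1 p.2)]

lemma skyline_iff_maximal [DecidableEq α] {v : α} {p : ℕ × ℕ} :
    skyline E v p ↔ Maximal (fun q => v ∈ core E q.1 q.2) p := by
  rw [maximal_iff, skyline, not_exists]
  refine and_congr_right fun _ => forall_congr' fun q => ?_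
  rw [Prod.le_def]
  tauto

end DIndex

/-- **Theorem 5.1: convergence of the `n`-order D-index.** The sequence
`n ↦ D^(n)(v)` is eventually constant and its eventual value is the set `SC(v)` of
skyline corenesses of `v`. -/
theorem Dseq_converges_to_skyline (E : V → V → Prop) [DecidableRel E] (v : V) :
    ∃ N : ℕ, ∀ n : ℕ, N ≤ n → Dseq E n v = {p : ℕ × ℕ | skyline E v p} := by
  refine ⟨Fintype.card V, fun n hn => Set.ext fun p => ?_⟩
  have dominated_iff (q : ℕ × ℕ) : q ∈ lowerClosure (Dseq E n v) ↔ v ∈ core E q.1 q.2 := by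
    rw [mem_lowerClosure_Dseq_iff_mem_iterate,
      core_eq_iterate_peelStep q.1 q.2 (hn.trans n.le_succ)]
  rw [← (isAntichain_Dseq n v).maximal_mem_lowerClosure_iff_mem, Set.mem_ofPred_eq,
    skyline_iff_maximal]
  simp only [dominated_iff]
end
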